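/- arXiv:2407.20154 — 3 statements merged into one kernel-verified Lean document; each statement's English description precedes it below -/
import Mathlib

section
/- For every k-algebra A over a field k, the structure map H_cf(A) → A of the cofree Hopf algebra on A is surjective. -/
open TensorProduct

universe u

namespace Paper

variable (k : Type u) [Field k]

/-- Elementary packaging of the cofree coalgebra on a vector space `V`: a coalgebra
`C` with a linear structure map `π : C → V` through which every linear map from a
coalgebra factors by a unique coalgebra morphism.  This is exactly the statement
that `V ↦ C` is right adjoint to the forgetful functor from coalgebras to vector
spaces. -/
structure CofreeCoalgebraOn (V : Type u) [AddCommGroup V] [Module k V] :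
    Type (u + 1) where
  C : Type u
  [addCommGroup : AddCommGroup C]
  [module : Module k C]
  [coalgebra : Coalgebra k C]
  π : C →ₗ[k] V
  lift : ∀ (D : Type u) [AddCommGroup D] [Module k D] [Coalgebra k D]
    (f : D →ₗ[k] V), ∃! g : D →ₗc[k] C, ∀ d : D, π (g d) = f d

attribute [instance] CofreeCoalgebraOn.addCommGroup CofreeCoalgebraOn.module
  CofreeCoalgebraOn.coalgebra

/-- Elementary packaging of the cofree bialgebra on an algebra `A`: a bialgebra `B`
with an algebra structure map `π : B → A` through which every algebra map from a
bialgebra factors by a unique bialgebra morphism. -/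
structure CofreeBialgebraOn (A : Type u) [Ring A] [Algebra k A] : Type (u + 1) where
  B : Type u
  [ring : Ring B]
  [bialgebra : Bialgebra k B]
  π : B →ₐ[k] A
  lift : ∀ (D : Type u) [Ring D] [Bialgebra k D] (f : D →ₐ[k] A),
    ∃! g : D →ₐc[k] B, ∀ d : D, π (g d) = f d

attribute [instance] CofreeBialgebraOn.ring CofreeBialgebraOn.bialgebra

/-- Elementary packaging of the cofree Hopf algebra on a bialgebra `B`: a Hopf
algebra `H` with a bialgebra structure map `π : H → B` through which every
bialgebra map from a Hopf algebra factors uniquely. -/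
structure CofreeHopfOnBialgebra (B : Type u) [Ring B] [Bialgebra k B] :
    Type (u + 1) where
  H : Type u
  [ring : Ring H]
  [hopfAlgebra : HopfAlgebra k H]
  π : H →ₐc[k] B
  lift : ∀ (D : Type u) [Ring D] [HopfAlgebra k D] (f : D →ₐc[k] B),
    ∃! g : D →ₐc[k] H, ∀ d : D, π (g d) = f d

attribute [instance] CofreeHopfOnBialgebra.ring CofreeHopfOnBialgebra.hopfAlgebra

/-- Elementary packaging of the cofree Hopf algebra on an algebra `A`: a Hopf
algebra `H` with an algebra structure map `π : H → A` through which every algebra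
map from a Hopf algebra factors by a unique morphism of Hopf algebras. -/
structure CofreeHopfOnAlgebra (A : Type u) [Ring A] [Algebra k A] :
    Type (u + 1) where
  H : Type u
  [ring : Ring H]
  [hopfAlgebra : HopfAlgebra k H]
  π : H →ₐ[k] A
  lift : ∀ (D : Type u) [Ring D] [HopfAlgebra k D] (f : D →ₐ[k] A),
    ∃! g : D →ₐc[k] H, ∀ d : D, π (g d) = f d

attribute [instance] CofreeHopfOnAlgebra.ring CofreeHopfOnAlgebra.hopfAlgebra

end Paper

open Paper

section PolynomialHopf

open Polynomial

/-- The additive bialgebra structure on `k[X]`, with `X` primitive. -/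
noncomputable abbrev polyBialgebra (k : Type u) [Field k] : Bialgebra k k[X] :=
  Bialgebra.ofAlgHom
    (aeval ((X : k[X]) ⊗ₜ[k] (1 : k[X]) + (1 : k[X]) ⊗ₜ[k] (X : k[X])))
    (aeval (0 : k))
    (by
      apply Polynomial.algHom_ext
      simp [TensorProduct.add_tmul, TensorProduct.tmul_add, Algebra.TensorProduct.one_def,
        add_assoc])
    (by apply Polynomial.algHom_ext; simp)
    (by apply Polynomial.algHom_ext; simp)

/-- The additive Hopf algebra structure on `k[X]`, with antipode `X ↦ -X`. -/
noncomputable abbrev polyHopf (k : Type u) [Field k] : HopfAlgebra k k[X] :=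
  letI := polyBialgebra k
  have hcomul : Bialgebra.comulAlgHom k k[X] X
      = (X : k[X]) ⊗ₜ[k] (1 : k[X]) + (1 : k[X]) ⊗ₜ[k] (X : k[X]) :=
    aeval_X (R := k) _
  have hcounit : Bialgebra.counitAlgHom k k[X] X = 0 := aeval_X (R := k) _
  HopfAlgebra.ofAlgHom (aeval (-X : k[X]))
    (by
      apply Polynomial.algHom_ext
      rw [AlgHom.comp_apply, AlgHom.comp_apply, hcomul, hcounit, map_add, map_zero]
      erw [Algebra.TensorProduct.lift_tmul, Algebra.TensorProduct.lift_tmul]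
      simp)
    (by
      apply Polynomial.algHom_ext
      rw [AlgHom.comp_apply, AlgHom.comp_apply, hcomul, hcounit]
      simp)

end PolynomialHopf

/-- **Lemma.** For every `k`-algebra `A`, the structure map `H_cf(A) → A` of the
cofree Hopf algebra on `A` (the value at `A` of the right adjoint of the forgetful
functor from Hopf `k`-algebras to `k`-algebras) is surjective. -/
theorem cofreeHopf_structure_map_surjective
    (k : Type u) [Field k] (A : Type u) [Ring A] [Algebra k A]
    (Q : CofreeHopfOnAlgebra k A) :
    Function.Surjective Q.π := by
  intro a
  letI := polyHopf k
  obtain ⟨g, hg, -⟩ := Q.lift (Polynomial k) (Polynomial.aeval a)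
  exact ⟨g Polynomial.X, (hg Polynomial.X).trans (Polynomial.aeval_X a)⟩
end

section
/- Let k be a field, H an S-affine Hopf k-algebra, A a k-algebra, and k ≤ k' a field extension. Then every k-algebra morphism H → A ⊗_k k' factors through the k-subalgebra A ⊗_k k'' ⊆ A ⊗_k k' for some intermediate field k ≤ k'' ≤ k' that is finitely generated as a field extension of k. -/
open TensorProduct

universe u

namespace Paper

/-- A Hopf algebra is S-affine (antipode-affine) if it is generated as an algebra by
the images of a finite subset under the iterates of the antipode. -/
def IsSAffine (k : Type u) (H : Type u) [CommRing k] [Ring H] [HopfAlgebra k H] : Prop :=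
  ∃ F : Finset H,
    Algebra.adjoin k
      (⋃ n : ℕ, (fun h => HopfAlgebra.antipode (R := k) (A := H) h)^[n] '' (F : Set H)) = ⊤

end Paper

open Paper

namespace Paper

section Coalg

open Coalgebra LinearMap WithConv

variable {k H : Type u} [Field k] [AddCommGroup H] [Module k H] [Coalgebra k H]

/-- `h ↦ φ(h₁) h₂`. -/
noncomputable def actL (φ : H →ₗ[k] k) : H →ₗ[k] H :=
  (TensorProduct.lid k H).toLinearMap ∘ₗ φ.rTensor H ∘ₗ comul

/-- `h ↦ ψ(h₂) h₁`. -/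
noncomputable def actR (ψ : H →ₗ[k] k) : H →ₗ[k] H :=
  (TensorProduct.rid k H).toLinearMap ∘ₗ ψ.lTensor H ∘ₗ comul

lemma actL_repr {ι : Type*} (φ : H →ₗ[k] k) {a : H} (r : Repr k a ι) :
    actL φ a = ∑ i ∈ r.index, φ (r.left i) • r.right i := by
  simp [actL, ← r.eq]

lemma actR_repr {ι : Type*} (φ : H →ₗ[k] k) {a : H} (r : Repr k a ι) :
    actR φ a = ∑ i ∈ r.index, φ (r.right i) • r.left i := by
  simp [actR, ← r.eq]

/-- Convolution of functionals. -/
noncomputable def cv (φ ψ : H →ₗ[k] k) : H →ₗ[k] k :=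
  (TensorProduct.lid k k).toLinearMap ∘ₗ TensorProduct.map φ ψ ∘ₗ comul

lemma cv_repr {ι : Type*} (φ ψ : H →ₗ[k] k) {a : H} (r : Repr k a ι) :
    cv φ ψ a = ∑ i ∈ r.index, φ (r.left i) * ψ (r.right i) := by
  simp [cv, ← r.eq]

lemma actL_actL (φ φ' : H →ₗ[k] k) (a : H) : actL φ (actL φ' a) = actL (cv φ' φ) a := by
  have h := sum_tmul_tmul_eq (ℛ k a) (fun i => ℛ k ((ℛ k a).left i))
    (fun i => ℛ k ((ℛ k a).right i))
  have h2 := congrArg ((TensorProduct.lid k H).toLinearMap ∘ₗ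
    (TensorProduct.map φ' ((TensorProduct.lid k H).toLinearMap ∘ₗ φ.rTensor H))) h
  simp only [map_sum, LinearMap.comp_apply, TensorProduct.map_tmul, LinearMap.rTensor_tmul,
    LinearEquiv.coe_coe, TensorProduct.lid_tmul] at h2
  rw [actL_repr φ' (ℛ k a), actL_repr _ (ℛ k a), map_sum]
  simp only [map_smul, fun i => actL_repr φ (ℛ k ((ℛ k a).right i)),
    fun i => cv_repr φ' φ (ℛ k ((ℛ k a).left i)), Finset.smul_sum, Finset.sum_smul, mul_smul]
  exact h2.symm

lemma actR_actR (φ φ' : H →ₗ[k] k) (a : H) : actR φ (actR φ' a) = actR (cv φ φ') a := by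
  have h := sum_tmul_tmul_eq (ℛ k a) (fun i => ℛ k ((ℛ k a).left i))
    (fun i => ℛ k ((ℛ k a).right i))
  have h2 := congrArg ((TensorProduct.rid k H).toLinearMap ∘ₗ
    (TensorProduct.map LinearMap.id ((TensorProduct.lid k k).toLinearMap ∘ₗ
      TensorProduct.map φ φ'))) h
  simp only [map_sum, LinearMap.comp_apply, TensorProduct.map_tmul, LinearMap.id_apply,
    LinearEquiv.coe_coe, TensorProduct.lid_tmul, TensorProduct.rid_tmul] at h2
  rw [actR_repr φ' (ℛ k a), actR_repr _ (ℛ k a), map_sum]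
  simp only [map_smul, fun i => actR_repr φ (ℛ k ((ℛ k a).left i)),
    fun i => cv_repr φ φ' (ℛ k ((ℛ k a).right i)), Finset.smul_sum, Finset.sum_smul]
  simp only [smul_eq_mul] at h2
  rw [← h2]
  simp only [smul_smul, mul_comm]

lemma actR_actL (φ ψ : H →ₗ[k] k) (a : H) : actR ψ (actL φ a) = actL φ (actR ψ a) := by
  have h := sum_tmul_tmul_eq (ℛ k a) (fun i => ℛ k ((ℛ k a).left i))
    (fun i => ℛ k ((ℛ k a).right i))
  have h2 := congrArg ((TensorProduct.lid k H).toLinearMap ∘ₗ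
    (TensorProduct.map φ ((TensorProduct.rid k H).toLinearMap ∘ₗ ψ.lTensor H))) h
  simp only [map_sum, LinearMap.comp_apply, TensorProduct.map_tmul, LinearMap.lTensor_tmul,
    LinearEquiv.coe_coe, TensorProduct.lid_tmul, TensorProduct.rid_tmul] at h2
  rw [actL_repr φ (ℛ k a), actR_repr _ (ℛ k a), map_sum, map_sum]
  simp only [map_smul, fun i => actR_repr ψ (ℛ k ((ℛ k a).right i)),
    fun i => actL_repr φ (ℛ k ((ℛ k a).left i)), Finset.smul_sum]
  rw [← h2]
  simp only [smul_smul, mul_comm]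

lemma actL_counit (a : H) : actL (counit (R := k)) a = a := by simp [actL]

lemma actR_counit (a : H) : actR (counit (R := k)) a = a := by simp [actR]

open Classical in
/-- Weak form of the fundamental theorem of coalgebras. -/
lemma exists_subcoalg (F : Finset H) : ∃ (C : Submodule k H) (T : Finset H),
    C ≤ Submodule.span k (T : Set H) ∧ (∀ h ∈ F, h ∈ C) ∧
    (∀ φ : H →ₗ[k] k, ∀ c ∈ C, actL φ c ∈ C) ∧ (∀ φ : H →ₗ[k] k, ∀ c ∈ C, actR φ c ∈ C) := by
  refine ⟨Submodule.span k {x | ∃ h ∈ F, ∃ φ ψ : H →ₗ[k] k, x = actL φ (actR ψ h)},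
    F.biUnion fun h => (ℛ k h).index.biUnion fun i =>
      (ℛ k ((ℛ k h).left i)).index.image (ℛ k ((ℛ k h).left i)).right, ?_, ?_, ?_, ?_⟩
  · rw [Submodule.span_le]
    rintro _ ⟨h, hh, φ, ψ, rfl⟩
    rw [actR_repr ψ (ℛ k h), map_sum]
    refine Submodule.sum_mem _ fun i hi => ?_
    rw [map_smul, actL_repr φ (ℛ k ((ℛ k h).left i))]
    refine Submodule.smul_mem _ _ (Submodule.sum_mem _ fun j hj => Submodule.smul_mem _ _
      (Submodule.subset_span ?_))
    simp only [Finset.coe_biUnion, Set.mem_iUnion, Finset.coe_image, Finset.mem_coe]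
    exact ⟨h, hh, i, hi, j, hj, rfl⟩
  · intro h hh
    exact Submodule.subset_span ⟨h, hh, counit, counit, by rw [actR_counit, actL_counit]⟩
  · intro φ c hc
    refine (Submodule.span_le (p := (Submodule.span k _).comap (actL φ))).2 ?_ hc
    rintro _ ⟨h, hh, φ', ψ, rfl⟩
    exact Submodule.subset_span ⟨h, hh, cv φ' φ, ψ, actL_actL _ _ _⟩
  · intro φ c hc
    refine (Submodule.span_le (p := (Submodule.span k _).comap (actR φ))).2 ?_ hc
    rintro _ ⟨h, hh, φ', ψ, rfl⟩
    exact Submodule.subset_span ⟨h, hh, φ', cv φ ψ, by rw [actR_actL, actR_actR]⟩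

lemma lTensor_comul_eq_zero {M : Type*} [AddCommGroup M] [Module k M] (g : H →ₗ[k] M) (c : H)
    (h : ∀ φ : H →ₗ[k] k, g (actL φ c) = 0) : g.lTensor H (comul (R := k) c) = 0 := by
  classical
  let b := Module.Basis.ofVectorSpace k H
  apply (TensorProduct.equivFinsuppOfBasisLeft (N := M) b).injective
  ext i
  rw [TensorProduct.equivFinsuppOfBasisLeft_apply, map_zero, Finsupp.zero_apply, ← h (b.coord i)]
  rw [actL_repr _ (ℛ k c), ← (ℛ k c).eq]
  simp

lemma rTensor_comul_eq_zero {M : Type*} [AddCommGroup M] [Module k M] (g : H →ₗ[k] M) (c : H)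
    (h : ∀ φ : H →ₗ[k] k, g (actR φ c) = 0) : g.rTensor H (comul (R := k) c) = 0 := by
  classical
  let b := Module.Basis.ofVectorSpace k H
  apply (TensorProduct.equivFinsuppOfBasisRight (M := M) b).injective
  ext i
  rw [TensorProduct.equivFinsuppOfBasisRight_apply, map_zero, Finsupp.zero_apply,
    ← h (b.coord i)]
  rw [actR_repr _ (ℛ k c), ← (ℛ k c).eq]
  simp

lemma conv_inv_mem {R : Type*} [Ring R] [Algebra k R] (S : Subalgebra k R) (p : R →ₗ[k] R)
    (hp1 : p 1 = 1) (hpS : ∀ x, p x ∈ S) (hpl : ∀ r ∈ S, ∀ x, p (r * x) = r * p x)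
    (C : Submodule k H) (hL : ∀ φ : H →ₗ[k] k, ∀ c ∈ C, actL φ c ∈ C)
    (hR : ∀ φ : H →ₗ[k] k, ∀ c ∈ C, actR φ c ∈ C)
    (u v : WithConv (H →ₗ[k] R)) (huv : u * v = 1) (hvu : v * u = 1)
    (hu : ∀ c ∈ C, u c ∈ S) : ∀ c ∈ C, v c ∈ S := by
  let w : WithConv (H →ₗ[k] R) := toConv (p ∘ₗ v.ofConv)
  have key : ∀ c ∈ C, (u * w) c = (1 : WithConv (H →ₗ[k] R)) c := by
    intro c hc
    let g : H →ₗ[k] (H →ₗ[k] R) :=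
      (LinearMap.mul k R).compl₁₂ u.ofConv w.ofConv -
        ((LinearMap.mul k R).compl₁₂ u.ofConv v.ofConv).compr₂ p
    have hg : ∀ c ∈ C, g c = 0 := by
      intro c hc
      ext x
      have := hpl _ (hu c hc) (v x)
      simp only [g, LinearMap.sub_apply, LinearMap.compl₁₂_apply, LinearMap.compr₂_apply,
        LinearMap.mul_apply', LinearMap.zero_apply, sub_eq_zero]
      exact this.symm
    have h0 := rTensor_comul_eq_zero g c fun φ => hg _ (hR φ c hc)
    have h1 := congrArg (TensorProduct.lift (LinearMap.id : (H →ₗ[k] R) →ₗ[k] _)) h0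
    rw [← (ℛ k c).eq] at h1
    simp only [map_sum, LinearMap.rTensor_tmul, TensorProduct.lift.tmul, LinearMap.id_apply,
      map_zero, g, LinearMap.sub_apply, LinearMap.compl₁₂_apply, LinearMap.compr₂_apply,
      LinearMap.mul_apply', Finset.sum_sub_distrib, sub_eq_zero] at h1
    rw [(ℛ k c).convMul_apply]
    refine h1.trans ?_
    rw [← map_sum]
    have h2 : (u * v) c = (1 : WithConv (H →ₗ[k] R)) c := by rw [huv]
    rw [(ℛ k c).convMul_apply] at h2
    refine (congrArg p h2).trans ?_
    simp [Algebra.algebraMap_eq_smul_one, hp1]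
  intro c hc
  have e1 : (v * (u * w)) c = (v * 1) c := by
    have h0 := lTensor_comul_eq_zero ((u * w).ofConv - (1 : WithConv (H →ₗ[k] R)).ofConv) c
      fun φ => by
        rw [LinearMap.sub_apply, sub_eq_zero]
        exact key _ (hL φ c hc)
    have h1 := congrArg (LinearMap.mul' k R ∘ₗ v.ofConv.rTensor R) h0
    rw [← (ℛ k c).eq] at h1
    simp only [map_sum, LinearMap.lTensor_tmul, LinearMap.comp_apply, LinearMap.rTensor_tmul,
      LinearMap.mul'_apply, map_zero, LinearMap.sub_apply, mul_sub, Finset.sum_sub_distrib,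
      sub_eq_zero] at h1
    rw [(ℛ k c).convMul_apply, (ℛ k c).convMul_apply]
    exact h1
  rw [← mul_assoc, hvu, one_mul, mul_one] at e1
  rw [← e1]
  exact hpS _

end Coalg

section Hopf

open Coalgebra HopfAlgebra WithConv

variable {k H : Type u} [Field k] [Ring H] [HopfAlgebra k H]

/-- The anti-homomorphism `f ∘ S` as a homomorphism to the opposite algebra. -/
noncomputable def opComp {R : Type*} [Ring R] [Algebra k R] (f : H →ₐ[k] R) : H →ₐ[k] Rᵐᵒᵖ :=
  (AlgHom.op f).comp (antipodeAlgHomOp k H)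

lemma opComp_apply {R : Type*} [Ring R] [Algebra k R] (f : H →ₐ[k] R) (h : H) :
    opComp f h = MulOpposite.op (f (antipode k h)) := rfl

lemma iterate_mem (C : Submodule k H) (hL : ∀ φ : H →ₗ[k] k, ∀ c ∈ C, actL φ c ∈ C)
    (hR : ∀ φ : H →ₗ[k] k, ∀ c ∈ C, actR φ c ∈ C) (n : ℕ) :
    ∀ {R : Type u} [Ring R] [Algebra k R] (S : Subalgebra k R) (p : R →ₗ[k] R)
    (_ : p 1 = 1) (_ : ∀ x, p x ∈ S) (_ : ∀ r ∈ S, ∀ x, p (r * x) = r * p x)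
    (_ : ∀ r ∈ S, ∀ x, p (x * r) = p x * r)
    (f : H →ₐ[k] R) (_ : ∀ c ∈ C, f c ∈ S), ∀ c ∈ C,
      f ((fun h => antipode k (A := H) h)^[n] c) ∈ S := by
  induction n with
  | zero => intro R _ _ S p _ _ _ _ f hf c hc; exact hf c hc
  | succ n ih =>
    intro R _ _ S p hp1 hpS hpl hpr f hf c hc
    have hv := conv_inv_mem S p hp1 hpS hpl C hL hR (toConv f.toLinearMap)
      (toConv (f.toLinearMap ∘ₗ antipode k))
      (by
        ext c
        rw [(ℛ k c).convMul_apply]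
        have := congrArg f (sum_mul_antipode_eq_algebraMap_counit (ℛ k c))
        simpa using this)
      (by
        ext c
        rw [(ℛ k c).convMul_apply]
        have := congrArg f (sum_antipode_mul_eq_algebraMap_counit (ℛ k c))
        simpa using this) hf
    have := ih (R := Rᵐᵒᵖ) S.op
      ((MulOpposite.opLinearEquiv k).toLinearMap ∘ₗ p ∘ₗ
        (MulOpposite.opLinearEquiv k).symm.toLinearMap)
      (by simp [hp1]) (fun x => hpS _)
      (fun r hr x => MulOpposite.unop_injective (hpr _ hr _))
      (fun r hr x => MulOpposite.unop_injective (hpl _ hr _))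
      (opComp f) (fun c hc => hv c hc) c hc
    rw [Function.iterate_succ_apply']
    exact this

end Hopf

section Fields

variable {k A k' : Type u} [Field k] [Ring A] [Algebra k A] [Field k'] [Algebra k k']

open Classical in
lemma exists_finset_mem (r : A ⊗[k] k') : ∃ s : Finset k', ∀ E : IntermediateField k k',
    (s : Set k') ⊆ E → r ∈ (Algebra.TensorProduct.map (AlgHom.id k A) E.val).range := by
  induction r with
  | zero => exact ⟨∅, fun E _ => zero_mem _⟩
  | tmul a x =>
    exact ⟨{x}, fun E hE => ⟨a ⊗ₜ ⟨x, hE (by simp)⟩, by simp⟩⟩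
  | add x y hx hy =>
    obtain ⟨s, hs⟩ := hx
    obtain ⟨t, ht⟩ := hy
    refine ⟨s ∪ t, fun E hE => add_mem (hs E ?_) (ht E ?_)⟩
    · exact fun x hx => hE (by simp_all)
    · exact fun x hx => hE (by simp_all)

lemma exists_proj (E : IntermediateField k k') : ∃ p : A ⊗[k] k' →ₗ[k] A ⊗[k] k',
    p 1 = 1 ∧ (∀ x, p x ∈ (Algebra.TensorProduct.map (AlgHom.id k A) E.val).range) ∧
    (∀ r ∈ (Algebra.TensorProduct.map (AlgHom.id k A) E.val).range, ∀ x,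
      p (r * x) = r * p x) ∧
    (∀ r ∈ (Algebra.TensorProduct.map (AlgHom.id k A) E.val).range, ∀ x,
      p (x * r) = p x * r) := by
  obtain ⟨q, hq⟩ := LinearMap.exists_leftInverse_of_injective (Algebra.linearMap E k')
    (LinearMap.ker_eq_bot.2 (algebraMap E k').injective)
  have hq1 : q 1 = 1 := by simpa using LinearMap.congr_fun hq 1
  let q' : k' →ₗ[k] k' := E.val.toLinearMap ∘ₗ q.restrictScalars k
  have hq' : ∀ (e : E) (x : k'), q' ((e : k') * x) = e * q' x := by
    intro e x
    have := q.map_smul e x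
    simp only [q', LinearMap.comp_apply, LinearMap.restrictScalars_apply]
    rw [Algebra.smul_def] at this
    exact (congrArg E.val this).trans (by simp)
  refine ⟨q'.lTensor A, ?_, ?_, ?_, ?_⟩
  · simp [Algebra.TensorProduct.one_def, q', hq1]
  · intro x
    induction x with
    | zero => rw [map_zero]; exact zero_mem _
    | tmul a x => exact ⟨a ⊗ₜ q x, by simp [q']⟩
    | add x y hx hy => rw [map_add]; exact add_mem hx hy
  · rintro _ ⟨r, rfl⟩ x
    induction r with
    | zero => simp
    | add r s hr hs => simp only [map_add, add_mul] at *; rw [hr, hs]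
    | tmul a e =>
      induction x with
      | zero => simp
      | add x y hx hy => simp only [map_add, mul_add] at *; rw [hx, hy]
      | tmul b x => simp [hq']
  · rintro _ ⟨r, rfl⟩ x
    induction r with
    | zero => simp
    | add r s hr hs => simp only [map_add, mul_add] at *; rw [hr, hs]
    | tmul a e =>
      induction x with
      | zero => simp
      | add x y hx hy => simp only [map_add, add_mul] at *; rw [hx, hy]
      | tmul b x => simp [mul_comm _ (e : k'), hq']

end Fields

end Paper

/-- **Lemma.** Let `H` be an S-affine Hopf `k`-algebra, `A` a `k`-algebra and
`k ≤ k'` a field extension.  Every `k`-algebra morphism `H → A ⊗ₖ k'` factors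
through the `k`-subalgebra `A ⊗ₖ k'' ⊆ A ⊗ₖ k'` for some intermediate field
`k ≤ k'' ≤ k'` which is finitely generated as a field extension of `k`. -/
theorem sAffine_algHom_factors_through_finitely_generated_subextension
    (k : Type u) [Field k] (H : Type u) [Ring H] [HopfAlgebra k H]
    (hH : IsSAffine k H)
    (A : Type u) [Ring A] [Algebra k A]
    (k' : Type u) [Field k'] [Algebra k k']
    (f : H →ₐ[k] A ⊗[k] k') :
    ∃ k'' : IntermediateField k k', k''.FG ∧
      ∀ h : H, f h ∈ (Algebra.TensorProduct.map (AlgHom.id k A) k''.val).range := by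
  classical
  obtain ⟨F, hF⟩ := hH
  obtain ⟨C, T, hCT, hFC, hL, hR⟩ := exists_subcoalg (k := k) F
  choose s hs using fun r : A ⊗[k] k' => exists_finset_mem r
  let t : Finset k' := T.biUnion fun x => s (f x)
  let E : IntermediateField k k' := IntermediateField.adjoin k (t : Set k')
  refine ⟨E, IntermediateField.fg_adjoin_finset t, ?_⟩
  obtain ⟨p, hp1, hpS, hpl, hpr⟩ := exists_proj (A := A) E
  have hfC : ∀ c ∈ C, f c ∈ (Algebra.TensorProduct.map (AlgHom.id k A) E.val).range := by
    intro c hc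
    refine (Submodule.span_le (p := (Subalgebra.toSubmodule
      (Algebra.TensorProduct.map (AlgHom.id k A) E.val).range).comap f.toLinearMap)).2 ?_ (hCT hc)
    intro x hx
    refine hs (f x) E (fun y hy => IntermediateField.subset_adjoin k _ ?_)
    exact Finset.mem_coe.2 (Finset.mem_biUnion.2 ⟨x, hx, hy⟩)
  intro h
  have hle : Algebra.adjoin k
      (⋃ n : ℕ, (fun h => HopfAlgebra.antipode (R := k) (A := H) h)^[n] '' (F : Set H)) ≤
      (Algebra.TensorProduct.map (AlgHom.id k A) E.val).range.comap f := by
    refine Algebra.adjoin_le ?_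
    intro x hx
    obtain ⟨n, y, hy, rfl⟩ := Set.mem_iUnion.1 hx
    exact iterate_mem C hL hR n _ p hp1 hpS hpl hpr f hfC y (hFC y hy)
  rw [hF] at hle
  exact hle (Algebra.mem_top (x := h))
end

section
/- Let k ≤ k' be a field extension with k' infinite-dimensional over k, and let S be an infinite set. Then scalar extension does not preserve the finite dual of the polynomial algebra on S (commutative k[S] or free noncommutative k⟨S⟩): any k'-algebra character k'[S] → k' under which the images of the variables in S span an infinite-dimensional k-subspace of k' vanishes on no ideal of k'[S] of the form I ⊗_k k' with I a finite-codimension ideal of k[S]; consequently the canonical map k[S]° ⊗_k k' → (k'[S])° is not surjective. -/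
universe u

namespace Paper

/-- A functional on a commutative `K`-algebra lies in the finite dual if its kernel
contains an ideal of finite codimension. -/
def MemFiniteDual (K : Type u) {A : Type u} [Field K] [CommRing A] [Algebra K A]
    (f : A →ₗ[K] K) : Prop :=
  ∃ I : Ideal A, FiniteDimensional K (A ⧸ I) ∧ ∀ p ∈ I, f p = 0

end Paper

open Paper MvPolynomial

/-- Part (1), phrased for algebra maps out of `k[S]`. -/
theorem Paper.exists_ne_zero_aux
    (k k' : Type u) [Field k] [Field k'] [Algebra k k'] (S : Type u)
    (χ : MvPolynomial S k' →ₐ[k'] k')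
    (h : ¬ FiniteDimensional k (Submodule.span k (Set.range fun s : S => χ (X s))))
    (I : Ideal (MvPolynomial S k)) (hI : FiniteDimensional k (MvPolynomial S k ⧸ I)) :
    ∃ p ∈ I, χ (MvPolynomial.map (algebraMap k k') p) ≠ 0 := by
  by_contra! hc
  apply h
  let φ : MvPolynomial S k →ₐ[k] k' := MvPolynomial.aeval fun s => χ (X s)
  have hφ : ∀ p, φ p = χ (MvPolynomial.map (algebraMap k k') p) := by
    intro p
    induction p using MvPolynomial.induction_on with
    | C a =>
      have : χ (C (algebraMap k k' a)) = algebraMap k k' a := χ.commutes _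
      simp [φ, this]
    | add p q hp hq => simp [hp, hq]
    | mul_X p s hp => simp [hp, φ]
  let ψ : (MvPolynomial S k ⧸ I) →ₐ[k] k' :=
    Ideal.Quotient.liftₐ I φ (fun p hp => by rw [hφ]; exact hc p hp)
  have hle : Submodule.span k (Set.range fun s : S => χ (X s)) ≤ LinearMap.range ψ.toLinearMap := by
    rw [Submodule.span_le]
    rintro _ ⟨s, rfl⟩
    refine ⟨Ideal.Quotient.mk I (X s), ?_⟩
    change φ (X s) = _
    simp [φ]
  exact Submodule.finiteDimensional_of_le hle

/-- Members of the span vanish on an extended ideal of finite codimension. -/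
theorem Paper.exists_ideal_aux
    (k k' : Type u) [Field k] [Field k'] [Algebra k k'] (S : Type u)
    (h : MvPolynomial S k' →ₗ[k'] k')
    (hh : h ∈ Submodule.span k'
        {g : MvPolynomial S k' →ₗ[k'] k' |
          ∃ f : MvPolynomial S k →ₗ[k] k, MemFiniteDual k f ∧
            ∀ p : MvPolynomial S k,
              g (MvPolynomial.map (algebraMap k k') p) = algebraMap k k' (f p)}) :
    ∃ I : Ideal (MvPolynomial S k), FiniteDimensional k (MvPolynomial S k ⧸ I) ∧
      ∀ p ∈ I, h (MvPolynomial.map (algebraMap k k') p) = 0 := by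
  induction hh using Submodule.span_induction with
  | mem g hg =>
    obtain ⟨f, ⟨I, hI, hf⟩, hg⟩ := hg
    exact ⟨I, hI, fun p hp => by rw [hg, hf p hp, map_zero]⟩
  | zero =>
    refine ⟨⊤, ?_, fun p _ => by simp⟩
    have : Subsingleton (MvPolynomial S k ⧸ (⊤ : Ideal (MvPolynomial S k))) :=
      Ideal.Quotient.subsingleton_iff.2 rfl
    infer_instance
  | add x y _ _ hx hy =>
    obtain ⟨I, hI, hx⟩ := hx
    obtain ⟨J, hJ, hy⟩ := hy
    refine ⟨I ⊓ J, ?_, fun p hp => by simp [hx p hp.1, hy p hp.2]⟩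
    let α : MvPolynomial S k →ₐ[k] (MvPolynomial S k ⧸ I) × (MvPolynomial S k ⧸ J) :=
      (Ideal.Quotient.mkₐ k I).prod (Ideal.Quotient.mkₐ k J)
    have hα : ∀ p, α p = 0 ↔ p ∈ I ⊓ J := by
      intro p
      simp [α, Prod.ext_iff, Ideal.Quotient.eq_zero_iff_mem]
    let β : (MvPolynomial S k ⧸ (I ⊓ J)) →ₐ[k] _ :=
      Ideal.Quotient.liftₐ (I ⊓ J) α (fun p hp => (hα p).2 hp)
    refine FiniteDimensional.of_injective β.toLinearMap ?_
    rw [injective_iff_map_eq_zero]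
    intro q hq
    obtain ⟨p, rfl⟩ := Ideal.Quotient.mk_surjective q
    exact Ideal.Quotient.eq_zero_iff_mem.2 ((hα p).1 hq)
  | smul a x _ hx =>
    obtain ⟨I, hI, hx⟩ := hx
    exact ⟨I, hI, fun p hp => by simp [hx p hp]⟩

/-- **Example.** Let `k ≤ k'` be a field extension with `k'` infinite-dimensional
over `k` and let `S` be an infinite set.  Then scalar extension does not preserve
the finite dual of the polynomial algebra `k[S]`:
(1) any `k'`-algebra character `χ : k'[S] → k'` under which the images of the
variables span an infinite-dimensional `k`-subspace of `k'` vanishes on no ideal of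
`k'[S]` extended from an ideal of finite codimension of `k[S]`; and
(2) consequently the canonical map `k[S]° ⊗ₖ k' → (k'[S])°` is not surjective, i.e.
some member of the finite dual of `k'[S]` is outside the `k'`-linear span of the
extensions of members of the finite dual of `k[S]`. -/
theorem polynomial_finite_dual_not_preserved
    (k k' : Type u) [Field k] [Field k'] [Algebra k k']
    (hkk' : ¬ FiniteDimensional k k')
    (S : Type u) [Infinite S] :
    (∀ χ : MvPolynomial S k' →ₐ[k'] k',
      ¬ FiniteDimensional k
        (Submodule.span k (Set.range fun s : S => χ (X s))) →
      ∀ I : Ideal (MvPolynomial S k), FiniteDimensional k (MvPolynomial S k ⧸ I) →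
        ∃ p ∈ I, χ (MvPolynomial.map (algebraMap k k') p) ≠ 0) ∧
    (∃ h : MvPolynomial S k' →ₗ[k'] k', MemFiniteDual k' h ∧
      h ∉ Submodule.span k'
        {g : MvPolynomial S k' →ₗ[k'] k' |
          ∃ f : MvPolynomial S k →ₗ[k] k, MemFiniteDual k f ∧
            ∀ p : MvPolynomial S k,
              g (MvPolynomial.map (algebraMap k k') p) = algebraMap k k' (f p)}) := by
  refine ⟨fun χ h I hI => Paper.exists_ne_zero_aux k k' S χ h I hI, ?_⟩
  let b := Module.Basis.ofVectorSpace k k'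
  have hinf : Infinite (Module.Basis.ofVectorSpaceIndex k k') := by
    by_contra hfin
    rw [not_infinite_iff_finite] at hfin
    exact hkk' (Module.Finite.of_basis b)
  let e := Infinite.natEmbedding (Module.Basis.ofVectorSpaceIndex k k')
  let j := Infinite.natEmbedding S
  let a : S → k' := fun s => b (e (Function.invFun j s))
  have ha : ∀ n, a (j n) = b (e n) := fun n => by
    simp only [a, Function.leftInverse_invFun j.injective n]
  let χ : MvPolynomial S k' →ₐ[k'] k' := MvPolynomial.aeval a
  have hχ : ∀ s, χ (X s) = a s := fun s => by simp [χ]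
  have hspan : ¬ FiniteDimensional k
      (Submodule.span k (Set.range fun s : S => χ (X s))) := by
    intro hfd
    have hli : LinearIndependent k (fun n : ℕ => b (e n)) :=
      b.linearIndependent.comp e e.injective
    let v : ℕ → Submodule.span k (Set.range fun s : S => χ (X s)) := fun n =>
      ⟨b (e n), Submodule.subset_span ⟨j n, by simp only [hχ, ha]⟩⟩
    have hv : LinearIndependent k v :=
      LinearIndependent.of_comp (Submodule.subtype _) hli
    have := hv.finite
    exact not_finite ℕ
  refine ⟨χ.toLinearMap, ⟨RingHom.ker χ, ?_, fun p hp => hp⟩, fun hmem => ?_⟩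
  · exact FiniteDimensional.of_injective (Ideal.kerLiftAlg χ).toLinearMap
      (Ideal.kerLiftAlg_injective χ)
  · obtain ⟨I, hI, h0⟩ := Paper.exists_ideal_aux k k' S _ hmem
    obtain ⟨p, hp, hne⟩ := Paper.exists_ne_zero_aux k k' S χ hspan I hI
    exact hne (h0 p hp)
end
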